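/- Suppose u, v ∈ B = ℂ[x,y] generate B as a ℂ-algebra, and suppose there do not exist a nonzero complex number ω and nonzero polynomials p, q ∈ ℝ[x,y] with q·v = ω·p in ℂ[x,y] (this expresses that the class [v] is nontrivial in the polar group Π(A), i.e., v ∉ B*·K* where K = ℝ(x,y)). Let m ≥ 1, let f ∈ B be nonzero, and let P = vᵐ·f + 1. Assume: (1) all coefficients of P are real, so P ∈ A = ℝ[x,y]; (2) P is irreducible in B; (3) every unit of A/PA is the residue class of a nonzero real constant. Then m = 1 and f generates the same ideal of B as v̄, i.e., f·B = v̄·B (f is an associate of v̄). -/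

import Mathlib

/-!
Since `ℂ[u, v] = ℂ[x, y]`, the substitution `x ↦ u, y ↦ v` is a surjective endomorphism of a
Noetherian ring, hence an automorphism, so `v` is prime (`prime_of_adjoin_eq_top`). If `v̄` divided
`v`, then `v` and `v̄` would differ by a constant, and `v` would be a constant times a real
polynomial; so `v̄ ∤ v`. As `P - 1 = vᵐ f` is real, it is divisible by `v̄ᵐ`, whence `f = v̄ᵐ g` and
`P = Nᵐ g + 1` with `N = v v̄` and `g` both real.

Modulo `P` the element `N` is a unit, hence congruent to a real constant `r`, so that
`N - r = P h`. Here `h ≠ 0` because `v` is not constant, and comparing total degrees gives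
`deg N ≥ m deg N + deg g` with `deg N > 0`. Therefore `m = 1` and `g` is a constant.
-/

open MvPolynomial

lemma injective_of_surjective_ringEnd {R : Type*} [CommRing R] [IsNoetherianRing R]
    (φ : R →+* R) (hφ : Function.Surjective φ) : Function.Injective φ := by
  have hiter : ∀ n x, (φ ^ n) x = φ^[n] x := fun n x => by rw [RingHom.coe_pow]
  -- the kernels of the iterates form an ascending chain
  obtain ⟨n, hn⟩ := monotone_stabilizes_iff_noetherian.mpr ‹IsNoetherianRing R›
    ⟨fun n => RingHom.ker (φ ^ n), monotone_nat_of_le_succ fun n x hx => by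
      rw [RingHom.mem_ker, hiter] at hx ⊢
      rw [Function.iterate_succ_apply', hx, map_zero]⟩
  rw [injective_iff_map_eq_zero]
  intro x hx
  obtain ⟨y, rfl⟩ := hφ.iterate n x
  have hy : y ∈ RingHom.ker (φ ^ (n + 1)) := by
    rw [RingHom.mem_ker, hiter, Function.iterate_succ_apply', hx]
  have hy' : y ∈ RingHom.ker (φ ^ n) := (SetLike.ext_iff.1 (hn (n + 1) n.le_succ) y).2 hy
  rwa [RingHom.mem_ker, hiter] at hy'

lemma totalDegree_pow_of_domain (p : MvPolynomial (Fin 2) ℂ) (hp : p ≠ 0) (n : ℕ) :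
    (p ^ n).totalDegree = n * p.totalDegree := by
  induction n with
  | zero => simp
  | succ n ih => rw [pow_succ, totalDegree_mul_of_isDomain (pow_ne_zero _ hp) hp, ih]; ring

lemma prime_of_adjoin_eq_top (u v : MvPolynomial (Fin 2) ℂ)
    (huv : Algebra.adjoin ℂ {u, v} = ⊤) : Prime v := by
  let φ : MvPolynomial (Fin 2) ℂ →ₐ[ℂ] MvPolynomial (Fin 2) ℂ := aeval ![u, v]
  have hsurj : Function.Surjective φ := by
    rw [← AlgHom.range_eq_top, ← huv, ← Algebra.adjoin_range_eq_range_aeval]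
    simp [Matrix.range_cons, Set.pair_comm]
  have hinj : Function.Injective φ :=
    injective_of_surjective_ringEnd φ.toRingHom hsurj
  let e := AlgEquiv.ofBijective φ ⟨hinj, hsurj⟩
  have he : e (X 1) = v := by simp [e, φ]
  rw [← he]
  exact (MulEquiv.prime_iff e).2 MvPolynomial.X_prime

lemma conj_conj_poly (p : MvPolynomial (Fin 2) ℂ) :
    map (starRingEnd ℂ) (map (starRingEnd ℂ) p) = p := by
  ext d; simp [coeff_map]

lemma conj_map_real (p : MvPolynomial (Fin 2) ℝ) :
    map (starRingEnd ℂ) (map (algebraMap ℝ ℂ) p) = map (algebraMap ℝ ℂ) p := by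
  ext d; simp [coeff_map]

lemma exists_real_of_conj_eq (p : MvPolynomial (Fin 2) ℂ)
    (h : map (starRingEnd ℂ) p = p) :
    ∃ q : MvPolynomial (Fin 2) ℝ, map (algebraMap ℝ ℂ) q = p := by
  have : p ∈ Set.range (map (algebraMap ℝ ℂ) : MvPolynomial (Fin 2) ℝ → _) := by
    rw [mem_range_map_iff_coeffs_subset]
    intro c hc
    obtain ⟨d, -, rfl⟩ := mem_coeffs_iff.1 hc
    have hd := congrArg (coeff d) h
    rw [coeff_map] at hd
    obtain ⟨r, hr⟩ := Complex.conj_eq_iff_real.1 hd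
    exact ⟨r, hr.symm⟩
  exact this

/-- If `v̄ ∣ v`, then `v = λ v̄` for a constant `λ`, and either `v + v̄` or `i v` is a real
polynomial proportional to `v`. -/
lemma real_of_conj_dvd (v : MvPolynomial (Fin 2) ℂ) (hv0 : v ≠ 0)
    (h : map (starRingEnd ℂ) v ∣ v) :
    ∃ ω : ℂ, ω ≠ 0 ∧ ∃ p q : MvPolynomial (Fin 2) ℝ, p ≠ 0 ∧ q ≠ 0 ∧
      map (algebraMap ℝ ℂ) q * v = C ω * map (algebraMap ℝ ℂ) p := by
  have h' : v ∣ map (starRingEnd ℂ) v := by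
    have := map_dvd (map (starRingEnd ℂ)) h
    rwa [conj_conj_poly] at this
  obtain ⟨c, hc⟩ := associated_of_dvd_dvd h' h
  obtain ⟨l, -, hl⟩ := isUnit_iff_eq_C_of_isReduced.1 c.isUnit
  rw [hl] at hc
  -- a real polynomial `w = a v` with `a ≠ 0` suffices
  suffices H : ∀ a : ℂ, a ≠ 0 → map (starRingEnd ℂ) (C a * v) = C a * v →
      ∃ ω : ℂ, ω ≠ 0 ∧ ∃ p q : MvPolynomial (Fin 2) ℝ, p ≠ 0 ∧ q ≠ 0 ∧
      map (algebraMap ℝ ℂ) q * v = C ω * map (algebraMap ℝ ℂ) p by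
    by_cases hl1 : 1 + l = 0
    · have hl2 : l = -1 := by linear_combination hl1
      refine H Complex.I Complex.I_ne_zero ?_
      rw [map_mul, ← hc, map_C, hl2]
      simp
    · refine H (1 + l) hl1 ?_
      have : C (1 + l) * v = v + map (starRingEnd ℂ) v := by
        rw [← hc, map_add]; simp only [map_one]; ring
      rw [this, map_add, conj_conj_poly, add_comm]
  intro a ha hreal
  obtain ⟨p, hp⟩ := exists_real_of_conj_eq _ hreal
  refine ⟨a⁻¹, inv_ne_zero ha, p, 1, ?_, one_ne_zero, ?_⟩
  · rintro rfl
    rw [map_zero] at hp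
    exact mul_ne_zero (C_ne_zero.2 ha) hv0 hp.symm
  · rw [hp, ← mul_assoc, ← C_mul, inv_mul_cancel₀ ha]; simp

theorem stmt_14 (u v : MvPolynomial (Fin 2) ℂ)
    (huv : Algebra.adjoin ℂ {u, v} = ⊤)
    (hv : ¬ ∃ ω : ℂ, ω ≠ 0 ∧ ∃ p q : MvPolynomial (Fin 2) ℝ, p ≠ 0 ∧ q ≠ 0 ∧
      MvPolynomial.map (algebraMap ℝ ℂ) q * v =
        MvPolynomial.C ω * MvPolynomial.map (algebraMap ℝ ℂ) p)
    (m : ℕ) (hm : 1 ≤ m)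
    (f : MvPolynomial (Fin 2) ℂ) (hf : f ≠ 0)
    (P : MvPolynomial (Fin 2) ℂ) (hP : P = v ^ m * f + 1)
    (P₀ : MvPolynomial (Fin 2) ℝ)
    (hP₀ : MvPolynomial.map (algebraMap ℝ ℂ) P₀ = P)
    (hirr : Irreducible P)
    (hunits : ∀ w : (MvPolynomial (Fin 2) ℝ ⧸ Ideal.span {P₀})ˣ,
      ∃ r : ℝ, r ≠ 0 ∧ (w : MvPolynomial (Fin 2) ℝ ⧸ Ideal.span {P₀}) =
        algebraMap ℝ (MvPolynomial (Fin 2) ℝ ⧸ Ideal.span {P₀}) r) :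
    m = 1 ∧ Ideal.span {f} =
      Ideal.span {MvPolynomial.map (starRingEnd ℂ) v} := by
  have hpv : Prime v := prime_of_adjoin_eq_top u v huv
  have hndvd : ¬ map (starRingEnd ℂ) v ∣ v := fun h => hv (real_of_conj_dvd v hpv.ne_zero h)
  have hconj : Function.Involutive (map (σ := Fin 2) (starRingEnd ℂ)) := conj_conj_poly
  set v' := map (starRingEnd ℂ) v with hv'
  have hv'v : map (starRingEnd ℂ) v' = v := conj_conj_poly v
  have hpv' : Prime v' :=
    (MulEquiv.prime_iff (RingEquiv.ofBijective (map (σ := Fin 2) (starRingEnd ℂ))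
      hconj.bijective)).2 hpv
  have hPc : map (starRingEnd ℂ) P = P := by rw [← hP₀, conj_map_real]
  have hvf : v' ^ m * map (starRingEnd ℂ) f = v ^ m * f := by
    have := hPc
    rw [hP] at this
    simpa using this
  obtain ⟨g, rfl⟩ : v' ^ m ∣ f :=
    hpv'.pow_dvd_of_dvd_mul_left m (fun h => hndvd (hpv'.dvd_of_dvd_pow h)) ⟨_, hvf.symm⟩
  have hg0 : g ≠ 0 := right_ne_zero_of_mul hf
  have hN0 : v * v' ≠ 0 := mul_ne_zero hpv.ne_zero hpv'.ne_zero
  have hgc : map (starRingEnd ℂ) g = g := by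
    apply mul_left_cancel₀ (pow_ne_zero m hN0)
    rw [map_mul, map_pow, hv'v] at hvf
    rw [mul_pow]
    linear_combination hvf
  obtain ⟨g₀, hg₀⟩ := exists_real_of_conj_eq g hgc
  obtain ⟨N₀, hN₀⟩ := exists_real_of_conj_eq (v * v') (by rw [map_mul, hv'v, mul_comm])
  have hP' : P = (v * v') ^ m * g + 1 := by rw [hP]; ring
  have hP₀' : P₀ = N₀ ^ m * g₀ + 1 := by
    apply map_injective _ (algebraMap ℝ ℂ).injective
    simp [hP₀, hP', hg₀, hN₀]
  have hunit : IsUnit (Ideal.Quotient.mk (Ideal.span {P₀}) N₀) := by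
    refine IsUnit.of_mul_eq_one (Ideal.Quotient.mk _ (-(N₀ ^ (m - 1) * g₀))) ?_
    rw [← map_mul, ← map_one (Ideal.Quotient.mk (Ideal.span {P₀})), Ideal.Quotient.eq,
      Ideal.mem_span_singleton]
    refine ⟨-1, ?_⟩
    obtain ⟨k, rfl⟩ := Nat.exists_eq_add_of_le' hm
    rw [hP₀', Nat.add_sub_cancel]
    ring
  obtain ⟨r, -, hr⟩ := hunits hunit.unit
  have hmem : N₀ - C r ∈ Ideal.span {P₀} := by
    rw [← Ideal.Quotient.eq]
    exact hr
  obtain ⟨h₀, hh₀⟩ := Ideal.mem_span_singleton.1 hmem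
  have hh : v * v' - C (r : ℂ) = P * map (algebraMap ℝ ℂ) h₀ := by
    rw [← hP₀, ← map_mul, ← hh₀, map_sub, hN₀, map_C]; rfl
  have hdegN : 0 < (v * v').totalDegree := by
    rw [totalDegree_mul_of_isDomain hpv.ne_zero hpv'.ne_zero]
    refine Nat.add_pos_left (Nat.pos_of_ne_zero fun h0 => hpv.not_isUnit ?_) _
    rw [totalDegree_eq_zero_iff_eq_C] at h0
    rw [h0]
    refine IsUnit.map C (IsUnit.mk0 _ fun hc => hpv.ne_zero ?_)
    rw [h0, hc, C_0]
  have hM : (v * v') ^ m * g ≠ 0 := mul_ne_zero (pow_ne_zero _ hN0) hg0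
  have hdegM : ((v * v') ^ m * g).totalDegree = m * (v * v').totalDegree + g.totalDegree := by
    rw [totalDegree_mul_of_isDomain (pow_ne_zero _ hN0) hg0, totalDegree_pow_of_domain _ hN0]
  have hMpos : 0 < ((v * v') ^ m * g).totalDegree := by
    rw [hdegM]; exact Nat.add_pos_left (Nat.mul_pos hm hdegN) _
  have hdegP : P.totalDegree = m * (v * v').totalDegree + g.totalDegree := by
    rw [hP', totalDegree_add_eq_left_of_totalDegree_lt (by simpa using hMpos), hdegM]
  have hdegL : (v * v' - C (r : ℂ)).totalDegree = (v * v').totalDegree := by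
    rw [sub_eq_add_neg, ← C_neg, totalDegree_add_eq_left_of_totalDegree_lt (by simpa using hdegN)]
  have hh0 : map (algebraMap ℝ ℂ) h₀ ≠ 0 := by
    intro h0
    rw [hh, h0, mul_zero, totalDegree_zero] at hdegL
    omega
  rw [hh, totalDegree_mul_of_isDomain hirr.ne_zero hh0, hdegP] at hdegL
  have hm1 : m = 1 := by
    by_contra hne
    have : 2 * (v * v').totalDegree ≤ m * (v * v').totalDegree :=
      Nat.mul_le_mul_right _ (by omega)
    omega
  subst hm1
  refine ⟨rfl, ?_⟩
  have hgdeg : g.totalDegree = 0 := by omega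
  rw [totalDegree_eq_zero_iff_eq_C] at hgdeg
  have hgu : IsUnit g := by
    rw [hgdeg]
    refine IsUnit.map C (IsUnit.mk0 _ fun hc => hg0 ?_)
    rw [hgdeg, hc, C_0]
  rw [pow_one]
  exact Ideal.span_singleton_mul_right_unit hgu v'
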